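/- Counterexample to polynomial rigidity in C¹: Let α be irrational with convergent denominators q_n, and let φ(x) = (1/C)∑_{k≥2} (e^{2πiq_kx} + e^{−2πiq_kx})/(q_k(log q_k)²), where C > 0 is chosen so that Var(φ) < 1/2. Then φ is C¹ with mean zero, and there is a constant c > 0 (depending on α and φ) such that for all sufficiently large n, sup over T-invariant Borel probability measures ν of ∫ d(T^{q_n}(x,y),(x,y))² dν ≥ c/(log q_n)⁴, where T = T_{α,φ} is the Anzai skew product. -/

import Mathlib

open MeasureTheory

/-!
Write `φ = ∑ₖ aₖ (e(qₖ x) + e(-qₖ x))` with `aₖ = 1 / (C qₖ (log qₖ)²)` for `k ≥ 2`. Since `qₖ`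
grows exponentially, `∑ₖ aₖ qₖ < ∞`, so `φ` is `C¹`. The Birkhoff sum `S` of `φ` of length `q_n`
over the rotation by `α` multiplies the mode `qₖ` by a geometric sum which is at most `π qₖ` in
modulus, because `q_{k+1} ‖qₖ α‖ ≥ 1/2`, and which tends to `0` as `n → ∞` for fixed `k`. By
dominated convergence `S → 0` uniformly. Hence `|S| ≤ 1/2` for all large `n`: `|S|` is then its own
distance to `ℤ`, and it bounds `d(T^{q_n}(x, y), (x, y))` from below.

An invariant measure of `T` projects to Haar measure on the first circle, the irrational rotation
being uniquely ergodic. So `∫ d² dν ≥ ∫ S² dx`, and the latter dominates the square of any single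
Fourier coefficient of `S`. One of `l = n`, `l = n + 1` satisfies both `q_l ≤ 2 q_n` and
`q_n ‖q_l α‖ ≤ 1/2`; at the frequency `q_l` the geometric sum has modulus at least `2 q_n / π`, so
the coefficient is at least `2 q_n a_l / π`, which is of order `1 / (log q_n)²`.
-/

section ContinuedFraction

variable {α : ℝ} (hα : Irrational α)

theorem one_le_dens (α : ℝ) (n : ℕ) : 1 ≤ (GenContFract.of α).dens n := by
  induction n with
  | zero => simp
  | succ n ih => exact ih.trans GenContFract.of_den_mono

include hα

theorem not_terminatedAt_of_irrational (n : ℕ) : ¬(GenContFract.of α).TerminatedAt n := fun h =>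
  let ⟨r, hr⟩ := GenContFract.exists_rat_eq_of_terminates ⟨n, h⟩
  hα ⟨r, hr.symm⟩

theorem exists_get?_s_eq_of_irrational (n : ℕ) :
    ∃ b : ℤ, 1 ≤ b ∧ (GenContFract.of α).s.get? n = some ⟨1, (b : ℝ)⟩ := by
  obtain ⟨⟨a, b'⟩, hgp⟩ := Option.ne_none_iff_exists'.1 (not_terminatedAt_of_irrational hα n)
  obtain ⟨rfl, b, rfl⟩ := GenContFract.of_partNum_eq_one_and_exists_int_partDen_eq hgp
  have hb : (1 : ℝ) ≤ b :=
    GenContFract.of_one_le_get?_partDen (GenContFract.partDen_eq_s_b hgp)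
  exact ⟨b, by exact_mod_cast hb, hgp⟩

theorem exists_int_eq_nums_of_irrational (n : ℕ) :
    ∃ p : ℤ, (GenContFract.of α).nums n = p := by
  induction n using Nat.twoStepInduction with
  | zero => exact ⟨⌊α⌋, by simp⟩
  | one =>
    obtain ⟨b, -, hb⟩ := exists_get?_s_eq_of_irrational hα 0
    exact ⟨b * ⌊α⌋ + 1, by rw [GenContFract.first_num_eq hb]; simp⟩
  | more n ih ih' =>
    obtain ⟨p, hp⟩ := ih
    obtain ⟨p', hp'⟩ := ih'
    obtain ⟨b, -, hb⟩ := exists_get?_s_eq_of_irrational hα (n + 1)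
    exact ⟨b * p' + 1 * p, by rw [GenContFract.nums_recurrence hb hp hp']; push_cast; ring⟩

theorem dens_add_dens_le_of_irrational (n : ℕ) :
    (GenContFract.of α).dens n + (GenContFract.of α).dens (n + 1) ≤
      (GenContFract.of α).dens (n + 2) := by
  obtain ⟨b, hb1, hb⟩ := exists_get?_s_eq_of_irrational hα (n + 1)
  rw [GenContFract.dens_recurrence hb rfl rfl]
  have hb1 : (1 : ℝ) ≤ b := by exact_mod_cast hb1
  nlinarith [one_le_dens α (n + 1)]

theorem two_pow_le_two_mul_dens_sq_of_irrational (n : ℕ) :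
    2 ^ n ≤ 2 * (GenContFract.of α).dens n ^ 2 := by
  induction n using Nat.twoStepInduction with
  | zero => simp
  | one => nlinarith [one_le_dens α 1]
  | more n ih _ =>
    have hadd := dens_add_dens_le_of_irrational hα n
    have hmono : (GenContFract.of α).dens n ≤ (GenContFract.of α).dens (n + 1) :=
      GenContFract.of_den_mono
    have hone := one_le_dens α n
    rw [pow_add]
    nlinarith

theorem dens_mul_abs_dens_mul_sub_nums_le_of_irrational (n : ℕ) :
    (GenContFract.of α).dens (n + 1) *
      |(GenContFract.of α).dens n * α - (GenContFract.of α).nums n| ≤ 1 := by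
  have hn : 0 < (GenContFract.of α).dens n := zero_lt_one.trans_le (one_le_dens α n)
  have hn' : 0 < (GenContFract.of α).dens (n + 1) := zero_lt_one.trans_le (one_le_dens α _)
  have h := GenContFract.abs_sub_convs_le (not_terminatedAt_of_irrational hα n)
  have hfactor : (GenContFract.of α).dens n * α - (GenContFract.of α).nums n =
      (GenContFract.of α).dens n * (α - (GenContFract.of α).convs n) := by
    rw [GenContFract.conv_eq_num_div_den]
    field_simp
  rw [le_div_iff₀ (by positivity)] at h
  rw [hfactor, abs_mul, abs_of_pos hn]
  linarith

theorem one_half_le_dens_mul_abs_dens_mul_sub_nums_of_irrational (n : ℕ) :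
    1 / 2 ≤ (GenContFract.of α).dens (n + 1) *
      |(GenContFract.of α).dens n * α - (GenContFract.of α).nums n| := by
  set A := (GenContFract.of α).nums
  set B := (GenContFract.of α).dens
  have hpos (k : ℕ) : 0 < B k := zero_lt_one.trans_le (one_le_dens α k)
  have hmono : B n ≤ B (n + 1) := GenContFract.of_den_mono
  have hadd : B n + B (n + 1) ≤ B (n + 2) := dens_add_dens_le_of_irrational hα n
  have hnext : B (n + 2) * |B (n + 1) * α - A (n + 1)| ≤ 1 :=
    dens_mul_abs_dens_mul_sub_nums_le_of_irrational hα (n + 1)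
  have hdet : A n * B (n + 1) - B n * A (n + 1) = (-1) ^ (n + 1) :=
    SimpContFract.determinant (s := SimpContFract.of α) (not_terminatedAt_of_irrational hα n)
  have hone : 1 ≤ B (n + 1) * |B n * α - A n| + B n * |B (n + 1) * α - A (n + 1)| := calc
    1 = |B n * (B (n + 1) * α - A (n + 1)) - B (n + 1) * (B n * α - A n)| := by
      rw [show B n * (B (n + 1) * α - A (n + 1)) - B (n + 1) * (B n * α - A n) =
        A n * B (n + 1) - B n * A (n + 1) by ring, hdet, abs_neg_one_pow]
    _ ≤ |B n * (B (n + 1) * α - A (n + 1))| + |B (n + 1) * (B n * α - A n)| := abs_sub _ _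
    _ = _ := by rw [abs_mul, abs_mul, abs_of_pos (hpos n), abs_of_pos (hpos (n + 1)), add_comm]
  have hhalf : 2 * B n * |B (n + 1) * α - A (n + 1)| ≤ 1 :=
    (mul_le_mul_of_nonneg_right (by linarith) (abs_nonneg _)).trans hnext
  linarith

variable {q : ℕ → ℕ} (hq : ∀ n, (q n : ℝ) = (GenContFract.of α).dens n)

include hq

omit hα in
theorem cast_dens_pos (n : ℕ) : (0 : ℝ) < q n := by
  rw [hq]
  exact zero_lt_one.trans_le (one_le_dens α n)

omit hα in
theorem monotone_dens : Monotone q :=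
  monotone_nat_of_le_succ fun n => Nat.cast_le (α := ℝ).1 <| by
    rw [hq, hq]
    exact GenContFract.of_den_mono

theorem strictMonoOn_dens_of_irrational : StrictMonoOn q (Set.Ici 1) := by
  refine strictMonoOn_of_lt_add_one Set.ordConnected_Ici fun n _ hn _ => ?_
  obtain ⟨m, rfl⟩ := Nat.exists_eq_add_of_le' (show 1 ≤ n from hn)
  have hadd := dens_add_dens_le_of_irrational hα m
  rw [← hq, ← hq, ← hq] at hadd
  have hlt : (q (m + 1) : ℝ) < q (m + 2) := by linarith [cast_dens_pos hq m]
  exact_mod_cast hlt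

theorem two_le_dens_of_irrational {n : ℕ} (hn : 2 ≤ n) : 2 ≤ q n := by
  have hlt : q 1 < q n := strictMonoOn_dens_of_irrational hα hq (Set.mem_Ici.2 le_rfl)
    (Set.mem_Ici.2 (one_le_two.trans hn)) hn
  have hpos : 0 < q 1 := by exact_mod_cast cast_dens_pos hq 1
  omega

theorem tendsto_dens_atTop_of_irrational : Filter.Tendsto q Filter.atTop Filter.atTop := by
  refine (Filter.tendsto_add_atTop_iff_nat 1).1 (StrictMono.tendsto_atTop fun m n hmn => ?_)
  exact strictMonoOn_dens_of_irrational hα hq (by simp) (by simp) (by omega)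

theorem dens_mul_norm_dens_nsmul_le_of_irrational (n : ℕ) :
    q (n + 1) * ‖q n • (α : UnitAddCircle)‖ ≤ 1 := by
  obtain ⟨p, hp⟩ := exists_int_eq_nums_of_irrational hα n
  have h := dens_mul_abs_dens_mul_sub_nums_le_of_irrational hα n
  rw [hp, ← hq, ← hq] at h
  refine (mul_le_mul_of_nonneg_left ?_ (Nat.cast_nonneg _)).trans h
  rw [← AddCircle.coe_nsmul, nsmul_eq_mul, UnitAddCircle.norm_eq]
  exact round_le _ p

theorem one_half_le_dens_mul_norm_dens_nsmul_of_irrational {n : ℕ} (hn : 1 ≤ n) :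
    1 / 2 ≤ q (n + 1) * ‖q n • (α : UnitAddCircle)‖ := by
  obtain ⟨p, hp⟩ := exists_int_eq_nums_of_irrational hα n
  have hle := dens_mul_abs_dens_mul_sub_nums_le_of_irrational hα n
  have hge := one_half_le_dens_mul_abs_dens_mul_sub_nums_of_irrational hα n
  rw [hp, ← hq, ← hq] at hle hge
  have htwo : (2 : ℝ) ≤ q (n + 1) := by
    exact_mod_cast two_le_dens_of_irrational hα hq (by omega : 2 ≤ n + 1)
  have hsmall : |q n * α - p| ≤ |(1 : ℝ)| / 2 := by
    rw [abs_one]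
    nlinarith [abs_nonneg (q n * α - p)]
  have hcoe : q n • (α : UnitAddCircle) = ((q n * α - p : ℝ) : UnitAddCircle) := by
    rw [← AddCircle.coe_nsmul, nsmul_eq_mul, AddCircle.coe_sub, sub_eq_self.2]
    exact AddCircle.coe_eq_zero_iff _ |>.2 ⟨p, by simp⟩
  rwa [hcoe, (AddCircle.norm_coe_eq_abs_iff (p := 1) one_ne_zero).2 hsmall]

theorem exists_dens_le_two_mul_and_mul_norm_le_of_irrational (n : ℕ) :
    ∃ l ≥ n, (q l : ℝ) ≤ 2 * q n ∧ q n * ‖q l • (α : UnitAddCircle)‖ ≤ 1 / 2 := by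
  have hn := dens_mul_norm_dens_nsmul_le_of_irrational hα hq n
  have hn' := dens_mul_norm_dens_nsmul_le_of_irrational hα hq (n + 1)
  have hpos := cast_dens_pos hq n
  by_cases h : q n * ‖q n • (α : UnitAddCircle)‖ ≤ 1 / 2
  · exact ⟨n, le_rfl, by linarith, h⟩
  · have hmono : (q n : ℝ) ≤ q (n + 1) := by exact_mod_cast monotone_dens hq n.le_succ
    have hadd := dens_add_dens_le_of_irrational hα n
    rw [← hq, ← hq, ← hq] at hadd
    push Not at h
    refine ⟨n + 1, n.le_succ, ?_, ?_⟩
    · by_contra! hlt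
      nlinarith [norm_nonneg (q n • (α : UnitAddCircle))]
    · nlinarith [norm_nonneg (q (n + 1) • (α : UnitAddCircle))]

end ContinuedFraction

section CircleGeomSum

theorem exists_coe_eq_and_abs_eq_norm {p : ℝ} (x : AddCircle p) :
    ∃ t : ℝ, (t : AddCircle p) = x ∧ |t| = ‖x‖ := by
  obtain ⟨t, rfl⟩ := QuotientAddGroup.mk_surjective x
  refine ⟨t - round (p⁻¹ * t) * p, ?_, (AddCircle.norm_eq p).symm⟩
  exact (AddCircle.coe_sub ..).trans
    (sub_eq_self.2 ((AddCircle.coe_eq_zero_iff _).2 ⟨round (p⁻¹ * t), by simp⟩))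

theorem norm_nsmul_eq_of_mul_norm_le {p : ℝ} (hp : p ≠ 0) {x : AddCircle p} {N : ℕ}
    (hN : N * ‖x‖ ≤ |p| / 2) : ‖N • x‖ = N * ‖x‖ := by
  obtain ⟨t, rfl, ht⟩ := exists_coe_eq_and_abs_eq_norm x
  have habs : |(N • t : ℝ)| = N * ‖(t : AddCircle p)‖ := by
    rw [nsmul_eq_mul, abs_mul, Nat.abs_cast, ht]
  rw [← AddCircle.coe_nsmul, ← habs, AddCircle.norm_coe_eq_abs_iff p hp, habs]
  exact hN

theorem exists_norm_toCircle_sub_one_eq (x : UnitAddCircle) :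
    ∃ t : ℝ, ‖(x.toCircle : ℂ) - 1‖ = 2 * |Real.sin (Real.pi * t)| ∧ |t| = ‖x‖ := by
  obtain ⟨t, rfl, ht⟩ := exists_coe_eq_and_abs_eq_norm x
  refine ⟨t, ?_, ht⟩
  rw [AddCircle.toCircle_apply_mk, Circle.coe_exp, mul_comm, Complex.norm_exp_I_mul_ofReal_sub_one,
    Real.norm_eq_abs, abs_mul, abs_two]
  ring_nf

theorem four_mul_norm_le_norm_toCircle_sub_one (x : UnitAddCircle) :
    4 * ‖x‖ ≤ ‖(x.toCircle : ℂ) - 1‖ := by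
  obtain ⟨t, hsin, ht⟩ := exists_norm_toCircle_sub_one_eq x
  have hπt : |Real.pi * t| = Real.pi * ‖x‖ := by rw [abs_mul, abs_of_pos Real.pi_pos, ht]
  have hhalf : ‖x‖ ≤ 1 / 2 := by simpa using AddCircle.norm_le_half_period 1 one_ne_zero (x := x)
  have h := Real.mul_abs_le_abs_sin (x := Real.pi * t)
    (by rw [hπt]; nlinarith [Real.pi_pos])
  rw [hπt, ← mul_assoc, div_mul_cancel₀ _ Real.pi_ne_zero] at h
  linarith

theorem norm_toCircle_sub_one_le (x : UnitAddCircle) :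
    ‖(x.toCircle : ℂ) - 1‖ ≤ 2 * Real.pi * ‖x‖ := by
  obtain ⟨t, hsin, ht⟩ := exists_norm_toCircle_sub_one_eq x
  have h := Real.abs_sin_le_abs (x := Real.pi * t)
  rw [abs_mul, abs_of_pos Real.pi_pos, ht] at h
  linarith

/-- The geometric sum `∑_{j < N} e(j x)`. For `x = m • a`, it is the multiplier by which passing to
the `N`-th Birkhoff sum over the rotation by `a` acts on the `m`-th Fourier mode. -/
noncomputable def circleGeomSum {T : ℝ} (N : ℕ) (x : AddCircle T) : ℂ :=
  ∑ j ∈ Finset.range N, (x.toCircle : ℂ) ^ j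

theorem norm_circleGeomSum_le {T : ℝ} (N : ℕ) (x : AddCircle T) : ‖circleGeomSum N x‖ ≤ N := by
  simpa [circleGeomSum, Circle.norm_coe] using
    norm_sum_le (Finset.range N) fun j => (x.toCircle : ℂ) ^ j

theorem norm_circleGeomSum_mul_norm_toCircle_sub_one {T : ℝ} (N : ℕ) (x : AddCircle T) :
    ‖circleGeomSum N x‖ * ‖(x.toCircle : ℂ) - 1‖ = ‖((N • x).toCircle : ℂ) - 1‖ := by
  rw [circleGeomSum, ← norm_mul, geom_sum_mul, AddCircle.toCircle_nsmul, Circle.coe_pow]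

theorem norm_circleGeomSum_mul_norm_le (N : ℕ) (x : UnitAddCircle) :
    ‖circleGeomSum N x‖ * ‖x‖ ≤ Real.pi / 2 * ‖N • x‖ := by
  have h := norm_circleGeomSum_mul_norm_toCircle_sub_one N x
  have hupper := norm_toCircle_sub_one_le (N • x)
  have hlower := mul_le_mul_of_nonneg_left (four_mul_norm_le_norm_toCircle_sub_one x)
    (norm_nonneg (circleGeomSum N x))
  linarith

theorem two_mul_div_pi_le_norm_circleGeomSum {N : ℕ} {x : UnitAddCircle}
    (hN : N * ‖x‖ ≤ 1 / 2) : 2 * N / Real.pi ≤ ‖circleGeomSum N x‖ := by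
  rcases eq_or_ne x 0 with rfl | hx
  · rw [circleGeomSum, AddCircle.toCircle_zero, div_le_iff₀ Real.pi_pos]
    simp only [Circle.coe_one, one_pow, Finset.sum_const, Finset.card_range, nsmul_eq_mul, mul_one,
      Complex.norm_natCast]
    nlinarith [Real.two_le_pi, N.cast_nonneg (α := ℝ)]
  · have h := norm_circleGeomSum_mul_norm_toCircle_sub_one N x
    have hlower := four_mul_norm_le_norm_toCircle_sub_one (N • x)
    have hupper := mul_le_mul_of_nonneg_left (norm_toCircle_sub_one_le x)
      (norm_nonneg (circleGeomSum N x))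
    rw [norm_nsmul_eq_of_mul_norm_le one_ne_zero (by simpa using hN)] at hlower
    rw [div_le_iff₀ Real.pi_pos]
    refine le_of_mul_le_mul_right ?_ (norm_pos_iff.2 hx)
    linarith

end CircleGeomSum

section BirkhoffSumRotation

open AddCircle

variable {T : ℝ} (a : AddCircle T)

theorem birkhoffSum_add_right_apply {G M : Type*} [AddMonoid G] [AddCommMonoid M] (a : G)
    (f : G → M) (N : ℕ) (x : G) :
    birkhoffSum (· + a) f N x = ∑ j ∈ Finset.range N, f (x + j • a) := by
  simp [birkhoffSum, add_right_iterate]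

theorem fourier_apply_add (m : ℤ) (x y : AddCircle T) :
    fourier m (x + y) = fourier m x * fourier m y := by
  simp only [fourier_apply, smul_add, toCircle_add, Circle.coe_mul]

theorem fourier_apply_nsmul (m : ℤ) (j : ℕ) (x : AddCircle T) :
    fourier m (j • x) = ((m • x).toCircle : ℂ) ^ j := by
  rw [fourier_apply, smul_comm, toCircle_nsmul, Circle.coe_pow]

theorem birkhoffSum_fourier (m : ℤ) (N : ℕ) (x : AddCircle T) :
    birkhoffSum (· + a) (fourier m) N x = circleGeomSum N (m • a) * fourier m x := by
  rw [birkhoffSum_add_right_apply, circleGeomSum, Finset.sum_mul]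
  refine Finset.sum_congr rfl fun j _ => ?_
  rw [fourier_apply_add, fourier_apply_nsmul, mul_comm]

variable [Fact (0 < T)]

theorem fourierCoeff_comp_add_right {E : Type*} [NormedAddCommGroup E] [NormedSpace ℂ E]
    (f : AddCircle T → E) (m : ℤ) :
    fourierCoeff (fun x => f (x + a)) m = fourier m a • fourierCoeff f m := by
  have hcancel (x : AddCircle T) : fourier m a * fourier (-m) (x + a) = fourier (-m) x := by
    rw [fourier_apply_add, mul_left_comm, ← fourier_add, add_neg_cancel, fourier_zero, mul_one]
  calc fourierCoeff (fun x => f (x + a)) m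
      = ∫ x, fourier m a • fourier (-m) (x + a) • f (x + a) ∂haarAddCircle := by
        simp only [fourierCoeff, smul_smul, hcancel]
    _ = fourier m a • fourierCoeff f m := by
        rw [integral_smul, integral_add_right_eq_self fun x => fourier (-m) x • f x, fourierCoeff]

theorem fourierCoeff_birkhoffSum {f : AddCircle T → ℂ} (hf : Integrable f haarAddCircle)
    (m : ℤ) (N : ℕ) :
    fourierCoeff (birkhoffSum (· + a) f N) m = circleGeomSum N (m • a) * fourierCoeff f m := by
  have hsum : birkhoffSum (· + a) f N = ∑ j ∈ Finset.range N, fun x => f (x + j • a) := by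
    ext x
    rw [birkhoffSum_add_right_apply, Finset.sum_apply]
  rw [hsum, fourierCoeff.sum _ _ fun j _ => hf.comp_add_right _, Finset.sum_apply, circleGeomSum,
    Finset.sum_mul]
  refine Finset.sum_congr rfl fun j _ => ?_
  rw [fourierCoeff_comp_add_right, fourier_apply_nsmul, smul_eq_mul]

theorem sq_norm_fourierCoeff_le_integral (f : C(AddCircle T, ℂ)) (m : ℤ) :
    ‖fourierCoeff f m‖ ^ 2 ≤ ∫ x, ‖f x‖ ^ 2 ∂haarAddCircle := by
  have h := le_hasSum (hasSum_sq_fourierCoeff (f.toLp 2 haarAddCircle ℂ)) m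
    fun _ _ => sq_nonneg _
  rw [fourierCoeff_toLp] at h
  refine h.trans_eq (integral_congr_ae ?_)
  filter_upwards [f.coeFn_toLp (p := 2) haarAddCircle (𝕜 := ℂ)] with x hx
  rw [hx]

end BirkhoffSumRotation

section CosSeries

open AddCircle

variable {ι : Type*} {a : ι → ℝ} (q : ι → ℕ)

/-- The cosine series `∑ₖ aₖ (e(qₖ x) + e(-qₖ x))`, with unordered summation. -/
noncomputable def cosSeries (a : ι → ℝ) (q : ι → ℕ) (x : UnitAddCircle) : ℝ :=
  ∑' k, 2 * a k * (fourier (q k) x).re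

theorem cosSeries_coe (a : ι → ℝ) (q : ι → ℕ) (x : ℝ) :
    cosSeries a q x = ∑' k, 2 * a k * Real.cos (2 * Real.pi * q k * x) := by
  refine tsum_congr fun k => ?_
  rw [fourier_coe_apply, ← Complex.exp_ofReal_mul_I_re]
  push_cast
  ring_nf

theorem norm_two_mul_re_fourier_le (c : ℝ) (m : ℤ) (x : UnitAddCircle) :
    ‖2 * c * (fourier m x).re‖ ≤ 2 * |c| := by
  have hre : |(fourier m x).re| ≤ 1 :=
    (Complex.abs_re_le_norm _).trans_eq (by rw [fourier_apply, Circle.norm_coe])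
  rw [Real.norm_eq_abs, abs_mul, abs_mul, abs_two]
  exact mul_le_of_le_one_right (by positivity) hre

theorem hasSum_cosSeries (ha : Summable a) (x : UnitAddCircle) :
    HasSum (fun k => 2 * a k * (fourier (q k) x).re) (cosSeries a q x) :=
  (Summable.of_norm_bounded (ha.abs.mul_left 2)
    fun _ => norm_two_mul_re_fourier_le _ _ _).hasSum

theorem continuous_cosSeries (ha : Summable a) : Continuous (cosSeries a q) :=
  continuous_tsum (fun _ => continuous_const.mul (Complex.continuous_re.comp (map_continuous _)))
    (ha.abs.mul_left 2) fun _ _ => norm_two_mul_re_fourier_le _ _ _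

theorem contDiff_one_cosSeries (ha : Summable a) (haq : Summable fun k => |a k| * q k) :
    ContDiff ℝ 1 fun x : ℝ => cosSeries a q x := by
  have hderiv (k : ι) (x : ℝ) : HasDerivAt (fun x => 2 * a k * Real.cos (2 * Real.pi * q k * x))
      (2 * a k * (-Real.sin (2 * Real.pi * q k * x) * (2 * Real.pi * q k))) x :=
    (((hasDerivAt_id x).const_mul _).cos.const_mul _).congr_deriv (by simp)
  have hbound (k : ι) (x : ℝ) :
      ‖2 * a k * (-Real.sin (2 * Real.pi * q k * x) * (2 * Real.pi * q k))‖ ≤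
        4 * Real.pi * (|a k| * q k) := by
    rw [Real.norm_eq_abs]
    simp only [abs_mul, abs_neg, abs_two, abs_of_pos Real.pi_pos, Nat.abs_cast]
    calc 2 * |a k| * (|Real.sin (2 * Real.pi * q k * x)| * (2 * Real.pi * q k))
        ≤ 2 * |a k| * (1 * (2 * Real.pi * q k)) := by
          gcongr
          exact Real.abs_sin_le_one _
      _ = _ := by ring
  have hsummable : Summable fun k => 2 * a k * Real.cos (2 * Real.pi * q k * 0) := by
    simpa using ha.mul_left 2
  have hsum (x : ℝ) := hasDerivAt_tsum (haq.mul_left (4 * Real.pi)) hderiv hbound hsummable x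
  simp only [cosSeries_coe]
  rw [contDiff_one_iff_deriv]
  refine ⟨fun x => (hsum x).differentiableAt, ?_⟩
  rw [funext fun x => (hsum x).deriv]
  exact continuous_tsum (fun k => by fun_prop) (haq.mul_left (4 * Real.pi)) hbound

theorem abs_birkhoffSum_cosSeries_le (ha : Summable a) (b : UnitAddCircle) (N : ℕ)
    (x : UnitAddCircle) :
    |birkhoffSum (· + b) (cosSeries a q) N x| ≤ ∑' k, 2 * |a k| * ‖circleGeomSum N (q k • b)‖ := by
  have hterm (k : ι) : ∑ j ∈ Finset.range N, 2 * a k * (fourier (q k) (x + j • b)).re =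
      2 * a k * (circleGeomSum N (q k • b) * fourier (q k) x).re := by
    rw [← natCast_zsmul, ← birkhoffSum_fourier, birkhoffSum_add_right_apply, Complex.re_sum,
      Finset.mul_sum]
  have hsum := hasSum_sum fun j (_ : j ∈ Finset.range N) => hasSum_cosSeries q ha (x + j • b)
  simp only [hterm, ← birkhoffSum_add_right_apply] at hsum
  have hbound (k : ι) : ‖2 * a k * (circleGeomSum N (q k • b) * fourier (q k) x).re‖ ≤
      2 * |a k| * ‖circleGeomSum N (q k • b)‖ := by
    rw [Real.norm_eq_abs, abs_mul, abs_mul, abs_two]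
    gcongr
    refine (Complex.abs_re_le_norm _).trans_eq ?_
    rw [norm_mul, fourier_apply, Circle.norm_coe, mul_one]
  rw [← hsum.tsum_eq, ← Real.norm_eq_abs]
  refine tsum_of_norm_bounded (Summable.hasSum ?_) hbound
  refine .of_nonneg_of_le (fun _ => by positivity) (fun k => ?_) (ha.abs.mul_left (2 * N : ℝ))
  nlinarith [mul_le_mul_of_nonneg_left (norm_circleGeomSum_le N (q k • b)) (abs_nonneg (a k))]

theorem hasSum_fourierCoeff_tsum {T : ℝ} [Fact (0 < T)] {E : Type*} [NormedAddCommGroup E]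
    [NormedSpace ℂ E] [Countable ι] {f : ι → AddCircle T → E}
    (hf : ∀ k, Integrable (f k) haarAddCircle)
    (hsum : Summable fun k => ∫ x, ‖f k x‖ ∂haarAddCircle) (m : ℤ) :
    HasSum (fun k => fourierCoeff (f k) m) (fourierCoeff (fun x => ∑' k, f k x) m) := by
  have hnorm (k : ι) (x : AddCircle T) : ‖fourier (-m) x • f k x‖ = ‖f k x‖ := by
    rw [norm_smul, fourier_apply, Circle.norm_coe, one_mul]
  have hint (k : ι) : Integrable (fun x => fourier (-m) x • f k x) haarAddCircle :=
    ((hf k).norm.mono' ((map_continuous _).aestronglyMeasurable.smul (hf k).1)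
      (.of_forall fun x => (hnorm k x).le))
  have h := hasSum_integral_of_summable_integral_norm hint (by simpa only [hnorm] using hsum)
  simpa only [fourierCoeff, tsum_const_smul''] using h

theorem fourierCoeff_two_mul_re_fourier (c : ℝ) (l : ℕ) (m : ℤ) :
    fourierCoeff (fun x : UnitAddCircle => ((2 * c * (fourier l x).re : ℝ) : ℂ)) m =
      c * ((if m = l then 1 else 0) + if m = -l then 1 else 0) := by
  have hmodes : (fun x : UnitAddCircle => ((2 * c * (fourier l x).re : ℝ) : ℂ)) =
      fun x => (c : ℂ) * (⇑(fourier (T := 1) l) + ⇑(fourier (T := 1) (-l : ℤ))) x := by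
    ext x
    have h := Complex.add_conj (fourier l x)
    rw [← fourier_neg] at h
    rw [Pi.add_apply, h]
    push_cast
    ring
  rw [hmodes, fourierCoeff.const_mul, fourierCoeff.add, Pi.add_apply, fourierCoeff_fourier,
    fourierCoeff_fourier, Pi.single_apply, Pi.single_apply]
  all_goals exact (map_continuous _).integrable_of_hasCompactSupport (.of_compactSpace _)

theorem hasSum_fourierCoeff_cosSeries [Countable ι] (ha : Summable a) (m : ℤ) :
    HasSum (fun k => (a k : ℂ) * ((if m = q k then 1 else 0) + if m = -q k then 1 else 0))
      (fourierCoeff (fun x => (cosSeries a q x : ℂ)) m) := by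
  have hint (k : ι) : Integrable
      (fun x : UnitAddCircle => ((2 * a k * (fourier (q k) x).re : ℝ) : ℂ)) haarAddCircle := by
    refine Continuous.integrable_of_hasCompactSupport ?_ (.of_compactSpace _)
    fun_prop
  have hle (k : ι) : ∫ x : UnitAddCircle, ‖((2 * a k * (fourier (q k) x).re : ℝ) : ℂ)‖
      ∂haarAddCircle ≤ 2 * |a k| := by
    have hbound (x : UnitAddCircle) := norm_two_mul_re_fourier_le (a k) (q k) x
    simpa using integral_mono_of_nonneg (μ := haarAddCircle) (.of_forall fun _ => norm_nonneg _)
      (integrable_const _) (.of_forall fun x => (Complex.norm_real _).trans_le (hbound x))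
  have h := hasSum_fourierCoeff_tsum hint
    (.of_nonneg_of_le (fun _ => integral_nonneg fun _ => norm_nonneg _) hle (ha.abs.mul_left 2)) m
  simp only [fourierCoeff_two_mul_re_fourier, ← Complex.ofReal_tsum] at h
  exact h

theorem fourierCoeff_cosSeries_zero [Countable ι] (ha : Summable a)
    (hq : ∀ k, a k ≠ 0 → q k ≠ 0) : fourierCoeff (fun x => (cosSeries a q x : ℂ)) 0 = 0 := by
  refine (hasSum_fourierCoeff_cosSeries q ha 0).unique (hasSum_zero.congr_fun fun k => ?_)
  rcases eq_or_ne (a k) 0 with hk | hk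
  · simp [hk]
  · have hqk : (0 : ℤ) ≠ q k := by exact_mod_cast (hq k hk).symm
    rw [if_neg hqk, if_neg (by omega), add_zero, mul_zero]

theorem fourierCoeff_cosSeries_eq [Countable ι] (ha : Summable a) {l : ι} (hl : q l ≠ 0)
    (hinj : ∀ k, a k ≠ 0 → q k = q l → k = l) :
    fourierCoeff (fun x => (cosSeries a q x : ℂ)) (q l) = a l := by
  classical
  refine (hasSum_fourierCoeff_cosSeries q ha (q l)).unique
    ((hasSum_ite_eq l (a l : ℂ)).congr_fun fun k => ?_)
  rw [if_neg (by omega : (q l : ℤ) ≠ -q k), add_zero]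
  rcases eq_or_ne k l with rfl | hkl
  · simp
  · rcases eq_or_ne (a k) 0 with hk | hk
    · simp [hk, hkl]
    · have hne : q k ≠ q l := mt (hinj k hk) hkl
      rw [if_neg (by exact_mod_cast hne.symm), if_neg hkl, mul_zero]

theorem intervalIntegral_cosSeries_eq_zero [Countable ι] (ha : Summable a)
    (hq : ∀ k, a k ≠ 0 → q k ≠ 0) : ∫ x in (0 : ℝ)..1, cosSeries a q x = 0 := by
  have h := fourierCoeff_eq_intervalIntegral (fun x => (cosSeries a q x : ℂ)) 0 0
  simp only [fourierCoeff_cosSeries_zero q ha hq, neg_zero, fourier_zero, one_smul, div_one,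
    zero_add, intervalIntegral.integral_ofReal] at h
  exact_mod_cast h.symm

end CosSeries

section DensBirkhoffSum

open Filter Topology

variable {α : ℝ} (hα : Irrational α) {q : ℕ → ℕ} (hq : ∀ n, (q n : ℝ) = (GenContFract.of α).dens n)

include hα hq

theorem norm_circleGeomSum_dens_nsmul_le_mul_norm {k : ℕ} (hk : 1 ≤ k) (N : ℕ) :
    ‖circleGeomSum N (q k • (α : UnitAddCircle))‖ ≤
      Real.pi * q k * (q (k + 1) * ‖N • (α : UnitAddCircle)‖) := by
  set x := q k • (α : UnitAddCircle)
  have hx : 1 / 2 ≤ q (k + 1) * ‖x‖ := one_half_le_dens_mul_norm_dens_nsmul_of_irrational hα hq hk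
  have hsmul : ‖N • x‖ ≤ q k * ‖N • (α : UnitAddCircle)‖ := by
    rw [smul_comm]
    exact norm_nsmul_le
  have hG := norm_circleGeomSum_mul_norm_le N x
  calc ‖circleGeomSum N x‖ = 2 * (‖circleGeomSum N x‖ * (1 / 2)) := by ring
    _ ≤ 2 * (‖circleGeomSum N x‖ * (q (k + 1) * ‖x‖)) := by gcongr
    _ = 2 * q (k + 1) * (‖circleGeomSum N x‖ * ‖x‖) := by ring
    _ ≤ 2 * q (k + 1) * (Real.pi / 2 * ‖N • x‖) := mul_le_mul_of_nonneg_left hG (by positivity)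
    _ ≤ 2 * q (k + 1) * (Real.pi / 2 * (q k * ‖N • (α : UnitAddCircle)‖)) := by gcongr
    _ = _ := by ring

theorem norm_circleGeomSum_dens_nsmul_dens_le {k : ℕ} (hk : 1 ≤ k) (n : ℕ) :
    ‖circleGeomSum (q n) (q k • (α : UnitAddCircle))‖ ≤ Real.pi * q k := by
  have hmono : Monotone q := monotone_dens hq
  rcases le_or_gt n k with hnk | hkn
  · have hle : (q n : ℝ) ≤ q k := by exact_mod_cast hmono hnk
    nlinarith [norm_circleGeomSum_le (q n) (q k • (α : UnitAddCircle)), Real.two_le_pi,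
      cast_dens_pos hq k]
  · refine (norm_circleGeomSum_dens_nsmul_le_mul_norm hα hq hk (q n)).trans ?_
    refine mul_le_of_le_one_right (by positivity)
      (le_trans ?_ (dens_mul_norm_dens_nsmul_le_of_irrational hα hq n))
    gcongr
    exact hmono (by omega)

theorem tendsto_norm_dens_nsmul_zero :
    Tendsto (fun n => ‖q n • (α : UnitAddCircle)‖) atTop (𝓝 0) := by
  refine squeeze_zero (fun _ => norm_nonneg _) (fun n => ?_)
    ((tendsto_inv_atTop_zero.comp tendsto_natCast_atTop_atTop).comp
      ((tendsto_dens_atTop_of_irrational hα hq).comp (tendsto_add_atTop_nat 1)))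
  have h := dens_mul_norm_dens_nsmul_le_of_irrational hα hq n
  rwa [mul_comm, ← le_div_iff₀ (cast_dens_pos hq _), one_div] at h

theorem tendsto_norm_circleGeomSum_dens_zero {k : ℕ} (hk : 1 ≤ k) :
    Tendsto (fun n => ‖circleGeomSum (q n) (q k • (α : UnitAddCircle))‖) atTop (𝓝 0) := by
  refine squeeze_zero (fun _ => norm_nonneg _)
    (fun n => norm_circleGeomSum_dens_nsmul_le_mul_norm hα hq hk (q n)) ?_
  simpa using ((tendsto_norm_dens_nsmul_zero hα hq).const_mul (q (k + 1) : ℝ)).const_mul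
    (Real.pi * q k)

variable {a : ℕ → ℝ} (ha0 : a 0 = 0) (haq : Summable fun k => |a k| * q k)

include haq

omit hα in
theorem summable_of_summable_abs_mul_dens : Summable a := by
  refine .of_norm_bounded haq fun k => le_mul_of_one_le_right (abs_nonneg _) ?_
  rw [hq]
  exact one_le_dens α k

include ha0

theorem tendsto_tsum_mul_norm_circleGeomSum_dens_zero :
    Tendsto (fun n => ∑' k, 2 * |a k| * ‖circleGeomSum (q n) (q k • (α : UnitAddCircle))‖)
      atTop (𝓝 0) := by
  rw [← tsum_zero (α := ℝ) (β := ℕ)]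
  refine tendsto_tsum_of_dominated_convergence (haq.mul_left (2 * Real.pi)) (fun k => ?_)
    (.of_forall fun n k => ?_) <;> rcases Nat.eq_zero_or_pos k with rfl | hk
  · simp [ha0]
  · simpa using (tendsto_norm_circleGeomSum_dens_zero hα hq hk).const_mul (2 * |a k|)
  · simp [ha0]
  · rw [Real.norm_of_nonneg (by positivity)]
    calc 2 * |a k| * ‖circleGeomSum (q n) (q k • (α : UnitAddCircle))‖
        ≤ 2 * |a k| * (Real.pi * q k) := by
          gcongr
          exact norm_circleGeomSum_dens_nsmul_dens_le hα hq hk n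
      _ = 2 * Real.pi * (|a k| * q k) := by ring

theorem eventually_abs_birkhoffSum_cosSeries_dens_le {ε : ℝ} (hε : 0 < ε) :
    ∀ᶠ n in atTop, ∀ x, |birkhoffSum (· + (α : UnitAddCircle)) (cosSeries a q) (q n) x| ≤ ε := by
  filter_upwards [(tendsto_tsum_mul_norm_circleGeomSum_dens_zero hα hq ha0 haq).eventually_le_const
    hε] with n hn x
  exact (abs_birkhoffSum_cosSeries_le q (summable_of_summable_abs_mul_dens hq haq) _ _ x).trans hn

end DensBirkhoffSum

section UniqueErgodicity

variable {G : Type*} [AddGroup G] [TopologicalSpace G] [IsTopologicalAddGroup G]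
  [MeasurableSpace G] [BorelSpace G] {μ : Measure G}

theorem continuous_integral_comp_const_add [FirstCountableTopology G] [IsFiniteMeasure μ]
    (f : BoundedContinuousFunction G ℝ) : Continuous fun x => ∫ y, f (x + y) ∂μ :=
  continuous_of_dominated
    (fun x => (f.continuous.comp (continuous_const_add x)).measurable.aestronglyMeasurable)
    (fun x => .of_forall fun y => f.norm_coe_le_norm (x + y)) (integrable_const _)
    (.of_forall fun y => f.continuous.comp (continuous_add_const y))

theorem isAddLeftInvariant_of_denseRange_zsmul [FirstCountableTopology G] [HasOuterApproxClosed G]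
    [IsFiniteMeasure μ] {g : G} (hg : DenseRange fun n : ℤ => n • g) (hμ : μ.map (g + ·) = μ) :
    μ.IsAddLeftInvariant := by
  -- `x ↦ ∫ f (x + y) dμ(y)` is continuous and `g`-periodic, hence constant.
  refine ⟨fun x => ext_of_forall_integral_eq_of_IsFiniteMeasure fun f => ?_⟩
  have hf (x : G) : AEStronglyMeasurable (fun y => f (x + y)) μ :=
    (f.continuous.comp (continuous_const_add x)).measurable.aestronglyMeasurable
  have hperiodic : Function.Periodic (fun x => ∫ y, f (x + y) ∂μ) g := fun x => by
    simp only [add_assoc]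
    rw [← integral_map (f := fun y => f (x + y)) (by fun_prop) (by rw [hμ]; exact hf x), hμ]
  have hconst : ∫ y, f (x + y) ∂μ = ∫ y, f (0 + y) ∂μ :=
    isClosed_property hg
      (isClosed_eq (continuous_integral_comp_const_add f) continuous_const) hperiodic.zsmul_eq x
  rw [integral_map (by fun_prop) f.continuous.measurable.aestronglyMeasurable, hconst]
  simp only [zero_add]

theorem eq_of_map_add_left_eq [CompactSpace G] [FirstCountableTopology G] [HasOuterApproxClosed G]
    [IsProbabilityMeasure μ] (ν : Measure G) [IsProbabilityMeasure ν] [ν.IsAddHaarMeasure] {g : G}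
    (hg : DenseRange fun n : ℤ => n • g) (hμ : μ.map (g + ·) = μ) : μ = ν := by
  have := isAddLeftInvariant_of_denseRange_zsmul hg hμ
  have : μ.IsAddHaarMeasure := Measure.isAddHaarMeasure_of_isCompact_nonempty_interior μ Set.univ
    isCompact_univ (by simp) (by simp) (by simp)
  exact Measure.isAddHaarMeasure_eq_of_isProbabilityMeasure μ ν

theorem eq_haarAddCircle_of_map_add_left_eq {α : ℝ} (hα : Irrational α)
    {μ : Measure UnitAddCircle} [IsProbabilityMeasure μ]
    (hμ : μ.map ((α : UnitAddCircle) + ·) = μ) : μ = AddCircle.haarAddCircle :=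
  eq_of_map_add_left_eq _ (AddCircle.denseRange_zsmul_coe_iff.2 (by simpa using hα)) hμ

end UniqueErgodicity

section SkewProduct

/-- The Anzai skew product `(x, y) ↦ (x + a, y + F x)` over the translation by `a`. -/
def skewProduct {G H : Type*} [Add G] [Add H] (a : G) (F : G → H) (z : G × H) : G × H :=
  (z.1 + a, z.2 + F z.1)

theorem iterate_skewProduct {G H : Type*} [AddMonoid G] [AddCommMonoid H] (a : G) (F : G → H)
    (N : ℕ) (z : G × H) :
    (skewProduct a F)^[N] z = (z.1 + N • a, z.2 + birkhoffSum (· + a) F N z.1) := by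
  induction N with
  | zero => simp
  | succ N ih =>
    rw [Function.iterate_succ_apply', ih, birkhoffSum_succ, add_right_iterate]
    simp [skewProduct, add_assoc, succ_nsmul]

theorem continuous_skewProduct {G H : Type*} [Add G] [Add H] [TopologicalSpace G]
    [TopologicalSpace H] [ContinuousAdd G] [ContinuousAdd H] (a : G) {F : G → H}
    (hF : Continuous F) : Continuous (skewProduct a F) := by
  unfold skewProduct
  fun_prop

theorem map_fst_eq_haarAddCircle_of_map_skewProduct_eq {α : ℝ} (hα : Irrational α)
    {H : Type*} [Add H] [MeasurableSpace H] {F : UnitAddCircle → H}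
    (hT : Measurable (skewProduct (α : UnitAddCircle) F)) {ν : Measure (UnitAddCircle × H)}
    [IsProbabilityMeasure ν] (hν : ν.map (skewProduct (α : UnitAddCircle) F) = ν) :
    ν.map Prod.fst = AddCircle.haarAddCircle := by
  have := Measure.isProbabilityMeasure_map (μ := ν) measurable_fst.aemeasurable
  refine eq_haarAddCircle_of_map_add_left_eq hα ?_
  nth_rw 2 [← hν]
  rw [Measure.map_map (by fun_prop) measurable_fst, Measure.map_map measurable_fst hT]
  exact congrArg (ν.map ·) (funext fun z => add_comm _ _)

theorem abs_birkhoffSum_le_dist_iterate_skewProduct {G : Type*} [AddMonoid G] [PseudoMetricSpace G]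
    {p : ℝ} (hp : p ≠ 0) {a : G} {F : G → ℝ} {N : ℕ} {z : G × AddCircle p}
    (hsmall : |birkhoffSum (· + a) F N z.1| ≤ |p| / 2) :
    |birkhoffSum (· + a) F N z.1| ≤
      dist ((skewProduct a fun x => (F x : AddCircle p))^[N] z) z := by
  have hcoe : birkhoffSum (· + a) (fun x => (F x : AddCircle p)) N z.1 =
      (birkhoffSum (· + a) F N z.1 : ℝ) :=
    (map_birkhoffSum (QuotientAddGroup.mk' (AddSubgroup.zmultiples p)) _ F N z.1).symm
  rw [iterate_skewProduct, hcoe, Prod.dist_eq]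
  refine le_max_of_le_right ?_
  rw [dist_eq_norm, add_sub_cancel_left, (AddCircle.norm_coe_eq_abs_iff p hp).2 hsmall]

theorem sq_norm_mul_fourierCoeff_le_integral_birkhoffSum_sq {T : ℝ} [Fact (0 < T)] (a : AddCircle T)
    {F : AddCircle T → ℝ} (hF : Continuous F) (N : ℕ) (m : ℤ) :
    (‖circleGeomSum N (m • a)‖ * ‖fourierCoeff (fun x => (F x : ℂ)) m‖) ^ 2 ≤
      ∫ x, birkhoffSum (· + a) F N x ^ 2 ∂AddCircle.haarAddCircle := by
  have hFc : Continuous fun x => (F x : ℂ) := Complex.continuous_ofReal.comp hF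
  have hcoe (x : AddCircle T) :
      birkhoffSum (· + a) (fun x => (F x : ℂ)) N x = (birkhoffSum (· + a) F N x : ℝ) :=
    (map_birkhoffSum Complex.ofRealHom _ F N x).symm
  have hScont : Continuous (birkhoffSum (· + a) (fun x => (F x : ℂ)) N) :=
    continuous_finsetSum _ fun j _ => hFc.comp ((continuous_add_const a).iterate j)
  have h := sq_norm_fourierCoeff_le_integral ⟨_, hScont⟩ m
  rw [ContinuousMap.coe_mk, fourierCoeff_birkhoffSum a
    (hFc.integrable_of_hasCompactSupport (.of_compactSpace _)), norm_mul] at h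
  simpa only [hcoe, Complex.norm_real, Real.norm_eq_abs, sq_abs] using h

theorem sq_norm_mul_fourierCoeff_le_integral_dist_sq {α : ℝ} (hα : Irrational α)
    {F : UnitAddCircle → ℝ} (hF : Continuous F) {N : ℕ}
    (hsmall : ∀ x, |birkhoffSum (· + (α : UnitAddCircle)) F N x| ≤ 1 / 2)
    {ν : Measure (UnitAddCircle × UnitAddCircle)} [IsProbabilityMeasure ν]
    (hν : ν.map (skewProduct (α : UnitAddCircle) fun x => (F x : UnitAddCircle)) = ν) (m : ℤ) :
    (‖circleGeomSum N (m • (α : UnitAddCircle))‖ * ‖fourierCoeff (fun x => (F x : ℂ)) m‖) ^ 2 ≤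
      ∫ z, dist ((skewProduct (α : UnitAddCircle) fun x => (F x : UnitAddCircle))^[N] z) z ^ 2
        ∂ν := by
  have hT : Continuous (skewProduct (α : UnitAddCircle) fun x => (F x : UnitAddCircle)) :=
    continuous_skewProduct _ ((AddCircle.continuous_mk' 1).comp hF)
  have hS : Continuous (birkhoffSum (· + (α : UnitAddCircle)) F N) :=
    continuous_finsetSum _ fun j _ => hF.comp ((continuous_add_const _).iterate j)
  have hSsq : Continuous fun x => birkhoffSum (· + (α : UnitAddCircle)) F N x ^ 2 := hS.pow 2
  refine (sq_norm_mul_fourierCoeff_le_integral_birkhoffSum_sq _ hF N m).trans ?_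
  rw [← map_fst_eq_haarAddCircle_of_map_skewProduct_eq hα hT.measurable hν,
    integral_map (by fun_prop) hSsq.measurable.aestronglyMeasurable]
  refine integral_mono ?_ ?_ fun z => ?_
  · exact (hSsq.comp continuous_fst).integrable_of_hasCompactSupport (.of_compactSpace _)
  · exact (((hT.iterate N).dist continuous_id).pow 2).integrable_of_hasCompactSupport
      (.of_compactSpace _)
  · rw [← sq_abs]
    exact pow_le_pow_left₀ (abs_nonneg _) (abs_birkhoffSum_le_dist_iterate_skewProduct one_ne_zero
      (by simpa using hsmall z.1)) 2

theorem eventually_sq_le_integral_dist_sq {α : ℝ} (hα : Irrational α) {q : ℕ → ℕ}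
    (hq : ∀ n, (q n : ℝ) = (GenContFract.of α).dens n) {a : ℕ → ℝ} (ha0 : a 0 = 0)
    (haq : Summable fun k => |a k| * q k) :
    ∀ᶠ n in Filter.atTop, ∀ l, 1 ≤ l → q n * ‖q l • (α : UnitAddCircle)‖ ≤ 1 / 2 →
      ∀ (ν : Measure (UnitAddCircle × UnitAddCircle)) [IsProbabilityMeasure ν],
        ν.map (skewProduct (α : UnitAddCircle) fun x => (cosSeries a q x : UnitAddCircle)) = ν →
        (2 * q n / Real.pi * |a l|) ^ 2 ≤ ∫ z, dist ((skewProduct (α : UnitAddCircle)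
          fun x => (cosSeries a q x : UnitAddCircle))^[q n] z) z ^ 2 ∂ν := by
  have ha := summable_of_summable_abs_mul_dens hq haq
  filter_upwards [eventually_abs_birkhoffSum_cosSeries_dens_le hα hq ha0 haq one_half_pos]
    with n hsmall l hl hqnl ν _ hν
  have hinj (k : ℕ) (hk : a k ≠ 0) (hkl : q k = q l) : k = l :=
    (strictMonoOn_dens_of_irrational hα hq).injOn
      (Nat.one_le_iff_ne_zero.2 fun h => hk (by rw [h, ha0])) hl hkl
  have hql : q l ≠ 0 := by exact_mod_cast (cast_dens_pos hq l).ne'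
  refine le_trans ?_ (sq_norm_mul_fourierCoeff_le_integral_dist_sq hα (continuous_cosSeries q ha)
    hsmall hν (q l))
  rw [fourierCoeff_cosSeries_eq q ha hql hinj, Complex.norm_real, Real.norm_eq_abs, natCast_zsmul]
  gcongr
  exact two_mul_div_pi_le_norm_circleGeomSum hqnl

end SkewProduct

section LogCoeff

/-- The coefficients `1 / (C q_k (log q_k)²)`, for `k ≥ 2`, of the cosine series `φ`; the cut-off
removes the indices at which `log q_k` may vanish. -/
noncomputable def logCoeff (C : ℝ) (q : ℕ → ℕ) (k : ℕ) : ℝ :=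
  if 2 ≤ k then 1 / (C * (q k * Real.log (q k) ^ 2)) else 0

theorem cosSeries_logCoeff_coe (C : ℝ) (q : ℕ → ℕ) (x : ℝ) :
    cosSeries (logCoeff C q) q x = (1 / C) * ∑' k : ℕ, if 2 ≤ k then
      2 * Real.cos (2 * Real.pi * q k * x) / (q k * Real.log (q k) ^ 2) else 0 := by
  rw [cosSeries_coe, ← tsum_mul_left]
  refine tsum_congr fun k => ?_
  rw [logCoeff]
  split_ifs <;> ring

variable {α : ℝ} (hα : Irrational α) {q : ℕ → ℕ} (hq : ∀ n, (q n : ℝ) = (GenContFract.of α).dens n)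

include hα hq

theorem mul_log_two_div_four_le_log_dens_of_irrational {n : ℕ} (hn : 2 ≤ n) :
    n * Real.log 2 / 4 ≤ Real.log (q n) := by
  have hn' : (2 : ℝ) ≤ n := by exact_mod_cast hn
  have hpos := cast_dens_pos hq n
  have h := Real.log_le_log (by positivity) (two_pow_le_two_mul_dens_sq_of_irrational hα n)
  rw [← hq, Real.log_pow, Real.log_mul two_ne_zero (by positivity), Real.log_pow] at h
  push_cast at h
  nlinarith [Real.log_pos one_lt_two]

theorem summable_abs_logCoeff_mul_dens (C : ℝ) : Summable fun k => |logCoeff C q k| * q k := by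
  refine .of_nonneg_of_le (fun k => by positivity) (fun k => ?_)
    ((Real.summable_one_div_nat_pow.2 one_lt_two).mul_left (16 / (|C| * Real.log 2 ^ 2)))
  rw [logCoeff]
  split_ifs with hk
  · have hlog := mul_log_two_div_four_le_log_dens_of_irrational hα hq hk
    have hqk := cast_dens_pos hq k
    calc |1 / (C * (q k * Real.log (q k) ^ 2))| * q k
        = |C|⁻¹ * (1 / Real.log (q k) ^ 2) := by
          rw [abs_div, abs_one, abs_mul, abs_of_nonneg (a := (q k : ℝ) * _) (by positivity)]
          field_simp
      _ ≤ |C|⁻¹ * (1 / (k * Real.log 2 / 4) ^ 2) := by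
          have := Real.log_pos one_lt_two
          gcongr
      _ = _ := by field_simp; norm_num
  · rw [abs_zero, zero_mul]
    positivity

theorem div_log_pow_four_le_sq_mul_logCoeff {C : ℝ} (hC : C ≠ 0) {n l : ℕ} (hn : 2 ≤ n)
    (hnl : n ≤ l) (hqnl : (q l : ℝ) ≤ 2 * q n) :
    1 / (16 * Real.pi ^ 2 * C ^ 2) / Real.log (q n) ^ 4 ≤
      (2 * q n / Real.pi * |logCoeff C q l|) ^ 2 := by
  have hpos (k : ℕ) := cast_dens_pos hq k
  have htwo {k : ℕ} (hk : 2 ≤ k) : (2 : ℝ) ≤ q k := by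
    exact_mod_cast two_le_dens_of_irrational hα hq hk
  have hlogl : 0 < Real.log (q l) := Real.log_pos (by linarith [htwo (hn.trans hnl)])
  have hlogn : 0 < Real.log (q n) := Real.log_pos (by linarith [htwo hn])
  have hlog : Real.log (q l) ≤ 2 * Real.log (q n) := by
    have h := Real.log_le_log (hpos l) hqnl
    rw [Real.log_mul two_ne_zero (hpos n).ne'] at h
    linarith [Real.log_le_log two_pos (htwo hn)]
  have hposn := hpos n
  have hposl := hpos l
  calc 1 / (16 * Real.pi ^ 2 * C ^ 2) / Real.log (q n) ^ 4
      = (2 * q n / Real.pi * (1 / (|C| * (2 * q n * (2 * Real.log (q n)) ^ 2)))) ^ 2 := by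
        rw [← sq_abs C]
        field_simp
        norm_num
    _ ≤ (2 * q n / Real.pi * (1 / (|C| * (q l * Real.log (q l) ^ 2)))) ^ 2 := by gcongr
    _ = (2 * q n / Real.pi * |logCoeff C q l|) ^ 2 := by
        rw [logCoeff, if_pos (hn.trans hnl), abs_div, abs_one, abs_mul,
          abs_of_nonneg (a := (q l : ℝ) * _) (by positivity)]

end LogCoeff

theorem liftIco_comp_coe {p : ℝ} [Fact (0 < p)] {B : Type*} (a : ℝ) (F : AddCircle p → B) :
    AddCircle.liftIco p a (fun x : ℝ => F x) = F :=
  funext fun _ => congrArg F AddCircle.coe_equivIco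

theorem counterexample_C1_general
    (α : ℝ) (hα : Irrational α)
    (q : ℕ → ℕ) (hq : ∀ n, (q n : ℝ) = (GenContFract.of α).dens n)
    (C : ℝ) (hC : C ≠ 0)
    (φ : ℝ → ℝ)
    (hφ : φ = fun x => (1 / C) * ∑' k : ℕ,
      if 2 ≤ k then
        2 * Real.cos (2 * Real.pi * (q k : ℝ) * x) / ((q k : ℝ) * Real.log (q k : ℝ) ^ 2)
      else 0)
    (T : AddCircle (1 : ℝ) × AddCircle (1 : ℝ) → AddCircle (1 : ℝ) × AddCircle (1 : ℝ))
    (hT : T = fun p => (p.1 + (α : AddCircle (1 : ℝ)),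
      p.2 + ((AddCircle.liftIco 1 0 φ p.1 : ℝ) : AddCircle (1 : ℝ)))) :
    ContDiff ℝ 1 φ ∧ (∫ x in (0 : ℝ)..1, φ x) = 0 ∧
    ∃ c : ℝ, 0 < c ∧ ∃ N : ℕ, ∀ n ≥ N,
      ∀ ν : Measure (AddCircle (1 : ℝ) × AddCircle (1 : ℝ)),
        IsProbabilityMeasure ν → Measure.map T ν = ν →
        c / Real.log (q n : ℝ) ^ 4 ≤ ∫ z, dist (T^[q n] z) z ^ 2 ∂ν := by
  obtain rfl : φ = fun x : ℝ => cosSeries (logCoeff C q) q x :=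
    hφ.trans (funext fun x => (cosSeries_logCoeff_coe C q x).symm)
  rw [liftIco_comp_coe] at hT
  obtain rfl : T = skewProduct (α : UnitAddCircle)
    fun x => (cosSeries (logCoeff C q) q x : UnitAddCircle) := hT
  have haq := summable_abs_logCoeff_mul_dens hα hq C
  have ha := summable_of_summable_abs_mul_dens hq haq
  have hqne (k : ℕ) (_ : logCoeff C q k ≠ 0) : q k ≠ 0 := by exact_mod_cast (cast_dens_pos hq k).ne'
  obtain ⟨N, hN⟩ := Filter.eventually_atTop.1 ((Filter.eventually_ge_atTop 2).and
    (eventually_sq_le_integral_dist_sq hα hq (if_neg (by norm_num)) haq))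
  refine ⟨contDiff_one_cosSeries q ha haq, intervalIntegral_cosSeries_eq_zero q ha hqne,
    1 / (16 * Real.pi ^ 2 * C ^ 2), by positivity, N, fun n hn ν hνprob hν => ?_⟩
  obtain ⟨hn2, hlower⟩ := hN n hn
  obtain ⟨l, hnl, hqnl, hl⟩ := exists_dens_le_two_mul_and_mul_norm_le_of_irrational hα hq n
  exact (div_log_pow_four_le_sq_mul_logCoeff hα hq hC hn2 hnl hqnl).trans
    (hlower l (by omega) hl ν hν)

/-- counterexample to polynomial rigidity in `C¹`: with `α` irrational
with convergent denominators `q_k`, and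
`φ(x) = (1/C)∑_{k≥2} (e(q_k x) + e(−q_k x))/(q_k (log q_k)²) =
(1/C)∑_{k≥2} 2cos(2πq_k x)/(q_k (log q_k)²)` where `C > 0` is chosen so that
`Var(φ) < 1/2`, the function `φ` is `C¹` with mean zero, and there is `c > 0` such that
for all large `n` and every `T_{α,φ}`-invariant Borel probability measure `ν`,
`∫ d(T^{q_n}(x,y),(x,y))² dν ≥ c/(log q_n)⁴`. -/
theorem counterexample_C1
    (α : ℝ) (hα : Irrational α)
    (q : ℕ → ℕ) (hq : ∀ n, (q n : ℝ) = (GenContFract.of α).dens n)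
    (C : ℝ) (hC : 0 < C)
    (φ : ℝ → ℝ)
    (hφ : φ = fun x => (1 / C) * ∑' k : ℕ,
      if 2 ≤ k then
        2 * Real.cos (2 * Real.pi * (q k : ℝ) * x) / ((q k : ℝ) * Real.log (q k : ℝ) ^ 2)
      else 0)
    (hVar : eVariationOn φ (Set.Icc 0 1) < ENNReal.ofReal (1/2))
    (T : AddCircle (1:ℝ) × AddCircle (1:ℝ) → AddCircle (1:ℝ) × AddCircle (1:ℝ))
    (hT : T = fun p => (p.1 + (α : AddCircle (1:ℝ)),
      p.2 + ((AddCircle.liftIco 1 0 φ p.1 : ℝ) : AddCircle (1:ℝ)))) :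
    ContDiff ℝ 1 φ ∧ (∫ x in (0:ℝ)..1, φ x) = 0 ∧
    ∃ c : ℝ, 0 < c ∧ ∃ N : ℕ, ∀ n ≥ N,
      ∀ ν : Measure (AddCircle (1:ℝ) × AddCircle (1:ℝ)),
        IsProbabilityMeasure ν → Measure.map T ν = ν →
        c / Real.log (q n : ℝ) ^ 4 ≤ ∫ z, dist (T^[q n] z) z ^ 2 ∂ν :=
  counterexample_C1_general α hα q hq C hC.ne' φ hφ T hT
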